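/- arXiv:math/0606027 — 2 statements merged into one kernel-verified Lean document; each statement's English description precedes it below -/
import Mathlib

section
/- Let n ≥ 1 be odd, let G be a finite group acting freely and continuously on the unit sphere Sⁿ ⊂ ℝⁿ⁺¹, and let N = Sⁿ/G be the orbit space with the quotient topology (an odd-dimensional spherical space form). Let m ≥ 1 and let f₁, f₂ : Sᵐ → N be continuous maps that are homotopic to each other. Then MCC(f₁, f₂) = 0; that is, there exist continuous maps f₁' homotopic to f₁ and f₂' homotopic to f₂ with f₁'(x) ≠ f₂'(x) for every x ∈ Sᵐ. -/
/-- The minimum number of coincidence components: the infimum, over all pairs of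
continuous maps homotopic to `f₁` and `f₂` respectively, of the (extended-natural)
number of connected components of the coincidence set. -/
noncomputable def MCC {M N : Type*} [TopologicalSpace M] [TopologicalSpace N]
    (f₁ f₂ : C(M, N)) : ℕ∞ :=
  ⨅ (g₁ : C(M, N)) (_ : g₁.Homotopic f₁) (g₂ : C(M, N)) (_ : g₂.Homotopic f₂),
    ENat.card (ConnectedComponents {x : M // g₁ x = g₂ x})

open Set Filter Topology Metric

section Covering

/-- Any map from a sphere punctured at `v` lifts through a covering map. -/
lemma IsCoveringMap.exists_lift_punctured_sphere {E N : Type*} [TopologicalSpace E]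
    [TopologicalSpace N] {p : E → N} (hp : IsCoveringMap p) {m : ℕ}
    (f : C(sphere (0 : EuclideanSpace ℝ (Fin (m + 1))) 1, N))
    (v x₀ : sphere (0 : EuclideanSpace ℝ (Fin (m + 1))) 1) (hx₀ : x₀ ≠ v) (e₀ : E)
    (he : p e₀ = f x₀) :
    ∃ F : sphere (0 : EuclideanSpace ℝ (Fin (m + 1))) 1 → E,
      ContinuousOn F {v}ᶜ ∧ F x₀ = e₀ ∧ ∀ x ≠ v, p (F x) = f x := by
  have : Fact (Module.finrank ℝ (EuclideanSpace ℝ (Fin (m + 1))) = m + 1) := ⟨by simp⟩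
  set φ := stereographic' m v
  have hs : φ.source = {v}ᶜ := stereographic'_source v
  have ht : φ.target = univ := stereographic'_target v
  have hc : Continuous φ.symm := by
    rw [← continuousOn_univ, ← ht]; exact φ.continuousOn_symm
  have hl : ∀ x ≠ v, φ.symm (φ x) = x := fun x hx => φ.left_inv (by simpa [hs] using hx)
  obtain ⟨F, ⟨h₁, h₂⟩, -⟩ := hp.existsUnique_continuousMap_lifts
    (f.comp ⟨φ.symm, hc⟩) (φ x₀) e₀ (by simp [hl x₀ hx₀, he])
  refine ⟨F ∘ φ, F.continuous.comp_continuousOn (hs ▸ φ.continuousOn), h₁, fun x hx => ?_⟩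
  have := congrFun h₂ (φ x)
  simpa [hl x hx] using this

/-- Maps from spheres of dimension at least two lift through covering maps. -/
lemma IsCoveringMap.exists_lift_sphere {E N : Type*} [TopologicalSpace E]
    [TopologicalSpace N] {p : E → N} (hp : IsCoveringMap p) (hsurj : Function.Surjective p)
    {m : ℕ} (hm : 2 ≤ m) (f : C(sphere (0 : EuclideanSpace ℝ (Fin (m + 1))) 1, N)) :
    ∃ F : C(sphere (0 : EuclideanSpace ℝ (Fin (m + 1))) 1, E), ∀ x, p (F x) = f x := by
  have : Fact (Module.finrank ℝ (EuclideanSpace ℝ (Fin (m + 1))) = m + 1) := ⟨by simp⟩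
  obtain ⟨v⟩ : Nonempty (sphere (0 : EuclideanSpace ℝ (Fin (m + 1))) 1) :=
    (NormedSpace.sphere_nonempty.mpr zero_le_one).to_subtype
  have hv : v ≠ -v := ne_neg_of_mem_unit_sphere ℝ v
  have hconn : IsConnected ({v, -v}ᶜ : Set (sphere (0 : EuclideanSpace ℝ (Fin (m + 1))) 1)) := by
    set φ := stereographic' m v
    have hs : φ.source = {v}ᶜ := stereographic'_source v
    have ht : φ.target = univ := stereographic'_target v
    have hc : Continuous φ.symm := by
      rw [← continuousOn_univ, ← ht]; exact φ.continuousOn_symm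
    have himg : φ.symm '' {φ (-v)}ᶜ = {v, -v}ᶜ := by
      ext x
      simp only [mem_image, mem_compl_iff, mem_singleton_iff, mem_insert_iff, not_or]
      constructor
      · rintro ⟨y, hy, rfl⟩
        have hmem : φ.symm y ∈ φ.source := φ.map_target (by simp [ht])
        refine ⟨by simpa [hs] using hmem, fun h => hy ?_⟩
        rw [← h, φ.right_inv (by simp [ht])]
      · rintro ⟨h₁, h₂⟩
        have hx : x ∈ φ.source := by simpa [hs] using h₁
        refine ⟨φ x, fun h => h₂ ?_, φ.left_inv hx⟩
        exact φ.injOn hx (by simpa [hs] using hv.symm) h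
    rw [← himg]
    refine (isConnected_compl_singleton_of_one_lt_rank ?_ _).image _ hc.continuousOn
    rw [← Module.finrank_eq_rank]
    simp only [finrank_euclideanSpace, Fintype.card_fin]
    exact_mod_cast hm
  obtain ⟨x₀, hx₀⟩ := hconn.nonempty
  obtain ⟨e₀, he₀⟩ := hsurj (f x₀)
  simp only [mem_compl_iff, mem_insert_iff, mem_singleton_iff, not_or] at hx₀
  obtain ⟨F, hF, hF₀, hFp⟩ := hp.exists_lift_punctured_sphere f v x₀ hx₀.1 e₀ he₀
  obtain ⟨F', hF', hF'₀, hF'p⟩ := hp.exists_lift_punctured_sphere f (-v) x₀ hx₀.2 e₀ he₀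
  have hEq : EqOn F F' {v, -v}ᶜ := by
    refine hp.eqOn_of_comp_eqOn hconn.isPreconnected (hF.mono ?_) (hF'.mono ?_) ?_
      (a := x₀) (by simp [hx₀]) (hF₀.trans hF'₀.symm)
    · intro x hx; simp_all
    · intro x hx; simp_all
    · intro x hx
      simp only [mem_compl_iff, mem_insert_iff, mem_singleton_iff, not_or] at hx
      simp [hFp x hx.1, hF'p x hx.2]
  classical
  let K : sphere (0 : EuclideanSpace ℝ (Fin (m + 1))) 1 → E := fun x => if x = v then F' x else F x
  have hK : EqOn K F {v}ᶜ := fun x hx => if_neg hx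
  have hK' : EqOn K F' {-v}ᶜ := by
    intro x hx
    by_cases h : x = v
    · simp [K, h]
    · rw [hK h]; exact hEq (by simp_all)
  have hcont : Continuous K := by
    rw [continuous_iff_continuousAt]
    intro x
    by_cases h : x = v
    · exact (hF'.congr hK').continuousAt (isOpen_compl_singleton.mem_nhds (by simp [h, hv]))
    · exact (hF.congr hK).continuousAt (isOpen_compl_singleton.mem_nhds h)
  refine ⟨⟨K, hcont⟩, fun x => ?_⟩
  by_cases h : x = v
  · exact (congrArg p (hK' (by simp [h, hv]))).trans (hF'p x (by simp [h, hv]))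
  · exact (congrArg p (hK h)).trans (hFp x h)

end Covering

section Flow

/-- Small nontrivial displacements along a fixed-point-free flow on a compact space leave the
orbits of a free action of a finite group. -/
lemma exists_pos_forall_ne_smul {X G : Type*} [TopologicalSpace X] [CompactSpace X] [T2Space X]
    [Group G] [Finite G] [MulAction G X] [ContinuousConstSMul G X] [IsCancelSMul G X]
    (Φ : ℝ × X → X) (hΦ : Continuous Φ) (h₀ : ∀ x, Φ (0, x) = x)
    (hne : ∀ t ∈ Ioo (0 : ℝ) 1, ∀ x, Φ (t, x) ≠ x) :
    ∃ ε > 0, ∀ t ∈ Ioc 0 ε, ∀ x, ∀ g : G, Φ (t, x) ≠ g • x := by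
  have key : ∀ g : G, g ≠ 1 → ∀ᶠ t in 𝓝 (0 : ℝ), ∀ x, Φ (t, x) ≠ g • x := by
    intro g hg
    have : ∀ᶠ t in 𝓝 (0 : ℝ), ∀ x ∈ (univ : Set X), Φ (t, x) ≠ g • x := by
      refine isCompact_univ.eventually_forall_of_forall_eventually fun x _ => ?_
      have hopen : IsOpen {z : ℝ × X | Φ z ≠ g • z.2} :=
        isOpen_ne_fun hΦ ((continuous_const_smul g).comp continuous_snd)
      refine hopen.mem_nhds ?_
      simp only [mem_ofPred_eq, h₀]
      intro h
      exact hg (isCancelSMul_iff_eq_one_of_smul_eq.mp ‹_› g x h.symm)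
    simpa using this
  have hall : ∀ᶠ t in 𝓝 (0 : ℝ), ∀ g : G, g ≠ 1 → ∀ x, Φ (t, x) ≠ g • x := by
    rw [eventually_all]
    intro g
    by_cases hg : g = 1
    · simp [hg]
    · filter_upwards [key g hg] with t ht _ using ht
  obtain ⟨δ, hδ, hball⟩ := Metric.eventually_nhds_iff.mp hall
  refine ⟨min (δ / 2) (1 / 2), by positivity, fun t ht x g => ?_⟩
  have ht₁ := ht.2.trans (min_le_left _ _)
  have ht₂ := ht.2.trans (min_le_right _ _)
  by_cases hg : g = 1
  · rw [hg, one_smul]; exact hne t ⟨ht.1, by linarith⟩ x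
  · refine hball ?_ g hg x
    rw [Real.dist_eq, sub_zero, abs_of_pos ht.1]; linarith

/-- An odd-dimensional sphere carries a flow without fixed points at small times. -/
lemma exists_flow_sphere_of_odd {n : ℕ} (hodd : Odd n) :
    ∃ Φ : ℝ × sphere (0 : EuclideanSpace ℝ (Fin (n + 1))) 1 →
        sphere (0 : EuclideanSpace ℝ (Fin (n + 1))) 1,
      Continuous Φ ∧ (∀ x, Φ (0, x) = x) ∧ ∀ t ∈ Ioo (0 : ℝ) 1, ∀ x, Φ (t, x) ≠ x := by
  obtain ⟨k, hk⟩ : ∃ k, n + 1 = k * 2 := by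
    obtain ⟨k, rfl⟩ := hodd; exact ⟨k + 1, by ring⟩
  let e : Fin (n + 1) ≃ Fin k × Bool :=
    ((finCongr hk).trans finProdFinEquiv.symm).trans
      (Equiv.prodCongr (Equiv.refl _) finTwoEquiv)
  let τ : Fin (n + 1) ≃ Fin (n + 1) :=
    (e.trans (Equiv.prodCongr (Equiv.refl _) Equiv.boolNot)).trans e.symm
  let s : Fin (n + 1) → ℝ := fun i => if (e i).2 then 1 else -1
  have hs : ∀ i, s (τ i) = - s i := by
    intro i
    simp only [s, τ, Equiv.trans_apply, Equiv.apply_symm_apply]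
    cases h : (e i).2 <;> simp [h]
  have hss : ∀ i, s i * s i = 1 := by intro i; simp only [s]; split_ifs <;> norm_num
  have hττ : ∀ i, τ (τ i) = i := by
    intro i
    simp [τ, Equiv.symm_apply_eq, Prod.ext_iff]
  let J : EuclideanSpace ℝ (Fin (n + 1)) → EuclideanSpace ℝ (Fin (n + 1)) :=
    fun x => WithLp.toLp 2 fun i => s i * x (τ i)
  have hJ : Continuous J := by fun_prop
  have hinner : ∀ x, inner ℝ x (J x) = 0 := by
    intro x
    have h₁ : inner ℝ x (J x) = ∑ i, s i * x (τ i) * x i := by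
      simp [PiLp.inner_apply, J]
    have h₂ : ∑ i, s i * x (τ i) * x i = ∑ i, -(s i * x (τ i) * x i) := by
      rw [← Equiv.sum_comp τ]
      refine Finset.sum_congr rfl fun i _ => ?_
      rw [hs, hττ]; ring
    rw [h₁]
    rw [Finset.sum_neg_distrib] at h₂
    linarith
  have hnorm : ∀ x, ‖J x‖ ^ 2 = ‖x‖ ^ 2 := by
    intro x
    rw [EuclideanSpace.real_norm_sq_eq, EuclideanSpace.real_norm_sq_eq,
      ← Equiv.sum_comp τ (fun i => x i ^ 2)]
    refine Finset.sum_congr rfl fun i _ => ?_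
    simp only [J]
    rw [mul_pow, sq (s i), hss, one_mul]
  have hmem : ∀ (t : ℝ) (x : sphere (0 : EuclideanSpace ℝ (Fin (n + 1))) 1),
      Real.cos t • (x : EuclideanSpace ℝ (Fin (n + 1))) + Real.sin t • J x ∈
        sphere (0 : EuclideanSpace ℝ (Fin (n + 1))) 1 := by
    intro t x
    have hx : ‖(x : EuclideanSpace ℝ (Fin (n + 1)))‖ = 1 := by simp
    rw [mem_sphere_zero_iff_norm, ← sq_eq_sq₀ (norm_nonneg _) zero_le_one, norm_add_sq_real,
      norm_smul, norm_smul, mul_pow, mul_pow, hnorm, hx, inner_smul_left, inner_smul_right, hinner]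
    simp
  refine ⟨fun z => ⟨_, hmem z.1 z.2⟩, by fun_prop, fun x => by simp, fun t ht x h => ?_⟩
  have h₁ := congrArg (fun y : sphere (0 : EuclideanSpace ℝ (Fin (n + 1))) 1 =>
    inner ℝ (x : EuclideanSpace ℝ (Fin (n + 1))) (y : EuclideanSpace ℝ (Fin (n + 1)))) h
  simp only [inner_add_right, inner_smul_right, hinner, real_inner_self_eq_norm_sq] at h₁
  have hx : ‖(x : EuclideanSpace ℝ (Fin (n + 1)))‖ = 1 := by simp
  rw [hx] at h₁
  have h₂ : Real.cos t < Real.cos 0 :=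
    Real.cos_lt_cos_of_nonneg_of_le_pi le_rfl (by linarith [ht.2, Real.pi_gt_three]) ht.1
  rw [Real.cos_zero] at h₂
  linarith

end Flow

section Circle

lemma exists_isQuotientMap_unitInterval_circle :
    ∃ q : unitInterval → Circle, IsQuotientMap q ∧ q 0 = q 1 ∧
      ∀ u v, q u = q v → u = v ∨ (u = 0 ∧ v = 1) ∨ (u = 1 ∧ v = 0) := by
  have hq : Continuous fun u : unitInterval => Circle.exp (2 * Real.pi * u) := by fun_prop
  refine ⟨fun u => Circle.exp (2 * Real.pi * u), ?_, ?_, ?_⟩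
  · refine hq.isClosedMap.isQuotientMap hq fun z => ?_
    obtain ⟨t, ht, rfl⟩ : ∃ t ∈ Ico (0 : ℝ) (0 + 2 * Real.pi), Circle.exp t = z := by
      obtain ⟨s, rfl⟩ : ∃ s, Circle.exp s = z := ⟨_, Circle.exp_arg z⟩
      obtain ⟨y, hy, h⟩ := Circle.periodic_exp.exists_mem_Ico Real.two_pi_pos s 0
      exact ⟨y, hy, h.symm⟩
    have hpi := Real.two_pi_pos
    refine ⟨⟨t / (2 * Real.pi), div_nonneg ht.1 hpi.le, ?_⟩, ?_⟩
    · rw [div_le_one hpi]; linarith [ht.2]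
    · simp only; congr 1; field_simp
  · simp
  · intro u v h
    obtain ⟨k, hk⟩ := Circle.exp_eq_exp.mp h
    have hk' : (u : ℝ) = v + k := by
      have hpi := Real.two_pi_pos
      have : 2 * Real.pi * (u : ℝ) = 2 * Real.pi * (v + k) := by rw [hk]; ring
      exact mul_left_cancel₀ hpi.ne' this
    have hu := u.2
    have hv := v.2
    have h₁ : (k : ℝ) < 2 := by linarith [hu.2, hv.1]
    have h₂ : (-2 : ℝ) < k := by linarith [hu.1, hv.2]
    have h₁' : k < 2 := by exact_mod_cast h₁
    have h₂' : -2 < k := by exact_mod_cast h₂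
    obtain rfl | rfl | rfl : k = -1 ∨ k = 0 ∨ k = 1 := by omega
    · push_cast at hk'
      refine Or.inr (Or.inl ⟨Subtype.ext (?_ : (u : ℝ) = 0), Subtype.ext (?_ : (v : ℝ) = 1)⟩)
      · linarith [hu.1, hv.2]
      · linarith [hu.1, hv.2]
    · left; exact Subtype.ext (by simpa using hk')
    · push_cast at hk'
      refine Or.inr (Or.inr ⟨Subtype.ext (?_ : (u : ℝ) = 1), Subtype.ext (?_ : (v : ℝ) = 0)⟩)
      · linarith [hv.1, hu.2]
      · linarith [hv.1, hu.2]

/-- An injective fixed-point-free self-map of the circle lifts, based at `y`, to a strictly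
increasing function. -/
lemma Circle.exists_strictMono_lift {g : Circle → Circle} (hg : Continuous g)
    (hinj : Function.Injective g) (hne : ∀ x, g x ≠ x) (y : Circle) :
    ∃ T : ℝ → ℝ, Continuous T ∧ T 0 = 0 ∧ StrictMono T ∧
      ∀ t, g (Circle.exp t * y) = Circle.exp (T t) * g y := by
  let w : ℝ → Circle := fun t => Circle.exp Real.pi * (g (Circle.exp t * y) / (Circle.exp t * y))
  have hw : Continuous w := by fun_prop
  have hslit : ∀ t, (w t : ℂ) ∈ Complex.slitPlane := by
    intro t
    rw [Complex.mem_slitPlane_iff_arg]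
    refine ⟨fun h => ?_, Circle.coe_ne_zero _⟩
    have h' : w t = Circle.exp Real.pi := by
      rw [← Circle.exp_arg (w t), h]
    have : g (Circle.exp t * y) / (Circle.exp t * y) = 1 := by simpa [w] using h'
    exact hne _ (div_eq_one.mp this)
  let θ : ℝ → ℝ := fun t => Complex.arg (w t)
  have hθ : Continuous θ := by
    rw [continuous_iff_continuousAt]
    intro t
    exact (Complex.continuousAt_arg (hslit t)).comp
      (f := fun t => (w t : ℂ)) (by fun_prop)
  have hexp : ∀ t, Circle.exp (θ t) = w t := fun t => Circle.exp_arg (w t)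
  have hlt : ∀ s t, θ s - θ t < 2 * Real.pi := by
    intro s t
    linarith [Complex.arg_le_pi (w s), Complex.neg_pi_lt_arg (w t)]
  let T : ℝ → ℝ := fun t => t + θ t - θ 0
  have hT : Continuous T := by fun_prop
  have hTexp : ∀ t, g (Circle.exp t * y) = Circle.exp (T t) * g y := by
    intro t
    simp only [T, Circle.exp_sub, Circle.exp_add, hexp, w, Circle.exp_zero, one_mul]
    ext
    push_cast
    field_simp [Circle.coe_ne_zero]
  have hTinj : Function.Injective T := by
    intro s t hst
    have h₁ : Circle.exp s = Circle.exp t := by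
      have : Circle.exp s * y = Circle.exp t * y := hinj (by rw [hTexp, hTexp, hst])
      exact mul_right_cancel this
    obtain ⟨k, hk⟩ := Circle.exp_eq_exp.mp h₁
    have h₂ : θ t - θ s = k * (2 * Real.pi) := by simp only [T] at hst; linarith
    have hpi := Real.two_pi_pos
    have h₃ : (k : ℝ) < 1 := by
      by_contra! h
      nlinarith [hlt t s]
    have h₄ : (-1 : ℝ) < k := by
      by_contra! h
      nlinarith [hlt s t]
    have h₃' : k < 1 := by exact_mod_cast h₃
    have h₄' : -1 < k := by exact_mod_cast h₄
    obtain rfl : k = 0 := by omega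
    simpa using hk
  refine ⟨T, hT, by simp [T], (hT.strictMono_of_inj hTinj).resolve_right fun hanti => ?_, hTexp⟩
  have h := hanti (show -(2 * Real.pi) < 0 by linarith [Real.two_pi_pos])
  simp only [T] at h
  linarith [hlt (-(2 * Real.pi)) 0]

end Circle

section Loops

/-- A homotopy of paths in `X` whose end points stay related by a fixed group element descends to
a homotopy of loops in the orbit space. -/
lemma exists_homotopic_of_twisted_homotopy {X G M : Type*} [TopologicalSpace X] [Group G]
    [MulAction G X] [TopologicalSpace M] [T2Space M]
    (f : C(M, Quotient (MulAction.orbitRel G X))) {q : unitInterval → M} (hq : IsQuotientMap q)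
    (hq₁ : ∀ u v, q u = q v → u = v ∨ (u = 0 ∧ v = 1) ∨ (u = 1 ∧ v = 0))
    (K : C(unitInterval × unitInterval, X)) (g : G) (hg : ∀ t, K (t, 1) = g • K (t, 0))
    (hK : ∀ u, (Quotient.mk _ (K (0, u)) : Quotient (MulAction.orbitRel G X)) = f (q u)) :
    ∃ f' : C(M, Quotient (MulAction.orbitRel G X)), f'.Homotopic f ∧
      ∀ u, f' (q u) = Quotient.mk _ (K (1, u)) := by
  have hQ : IsQuotientMap (Prod.map id q : unitInterval × unitInterval → unitInterval × M) := by
    have hc : Continuous (Prod.map id q : unitInterval × unitInterval → unitInterval × M) :=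
      continuous_id.prodMap hq.continuous
    exact hc.isClosedMap.isQuotientMap hc (Function.surjective_id.prodMap hq.surjective)
  let L : C(unitInterval × unitInterval, Quotient (MulAction.orbitRel G X)) :=
    ⟨fun z => Quotient.mk _ (K z), continuous_quotient_mk'.comp K.continuous⟩
  have hL : ∀ t, L (t, 1) = L (t, 0) := fun t => Quotient.sound ⟨g, (hg t).symm⟩
  have hfac : Function.FactorsThrough L (Prod.map id q) := by
    rintro ⟨t, u⟩ ⟨t', v⟩ h
    simp only [Prod.map_apply, id_eq, Prod.mk.injEq] at h
    obtain ⟨rfl, h⟩ := h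
    obtain rfl | ⟨rfl, rfl⟩ | ⟨rfl, rfl⟩ := hq₁ u v h
    · rfl
    · exact (hL t).symm
    · exact hL t
  let L' := IsQuotientMap.lift (f := ⟨_, hQ.continuous⟩) hQ L hfac
  have hL' : ∀ t u, L' (t, q u) = L (t, u) := fun t u =>
    DFunLike.congr_fun (IsQuotientMap.lift_comp (f := ⟨_, hQ.continuous⟩) hQ L hfac) (t, u)
  refine ⟨⟨fun x => L' (1, x), by fun_prop⟩, ContinuousMap.Homotopic.symm ⟨⟨L', ?_, ?_⟩⟩, ?_⟩
  · intro x
    obtain ⟨u, rfl⟩ := hq.surjective x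
    exact (hL' 0 u).trans (hK u)
  · intro x; rfl
  · exact hL' 1

/-- A loop in an orbit space lifts to a path whose end points differ by a group element. -/
lemma exists_twisted_lift {X G M : Type*} [TopologicalSpace X] [Group G]
    [MulAction G X] [TopologicalSpace M]
    (hp : IsCoveringMap (Quotient.mk (MulAction.orbitRel G X)))
    (f : C(M, Quotient (MulAction.orbitRel G X))) {q : unitInterval → M} (hq : Continuous q)
    (hq₀ : q 0 = q 1) :
    ∃ (F : C(unitInterval, X)) (g : G), F 1 = g • F 0 ∧
      ∀ u, (Quotient.mk _ (F u) : Quotient (MulAction.orbitRel G X)) = f (q u) := by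
  obtain ⟨x, hx⟩ := Quotient.exists_rep (f (q 0))
  obtain ⟨F, hF, -⟩ := hp.exists_path_lifts (f.comp ⟨q, hq⟩) x hx.symm
  have hF' : ∀ u, (Quotient.mk _ (F u) : Quotient (MulAction.orbitRel G X)) = f (q u) :=
    fun u => congrFun hF u
  obtain ⟨g, hg⟩ := Quotient.exact ((hF' 1).trans ((congrArg f hq₀).symm.trans (hF' 0).symm))
  exact ⟨F, g, hg.symm, hF'⟩

/-- Loops in the orbit space of a free finite group action on a circle. -/
lemma exists_homotopic_ne_of_homeomorph_circle {X G M : Type*} [TopologicalSpace X]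
    [CompactSpace X] [T2Space X] [Group G] [Finite G] [MulAction G X] [ContinuousConstSMul G X]
    [IsCancelSMul G X] [TopologicalSpace M] [T2Space M] (e : X ≃ₜ Circle)
    (hp : IsCoveringMap (Quotient.mk (MulAction.orbitRel G X)))
    (f : C(M, Quotient (MulAction.orbitRel G X))) {q : unitInterval → M} (hq : IsQuotientMap q)
    (hq₀ : q 0 = q 1)
    (hq₁ : ∀ u v, q u = q v → u = v ∨ (u = 0 ∧ v = 1) ∨ (u = 1 ∧ v = 0)) :
    ∃ f₁ f₂ : C(M, Quotient (MulAction.orbitRel G X)),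
      f₁.Homotopic f ∧ f₂.Homotopic f ∧ ∀ x, f₁ x ≠ f₂ x := by
  obtain ⟨F, g, hg, hF⟩ := exists_twisted_lift hp f hq.continuous hq₀
  let Φ : ℝ × X → X := fun z => e.symm (Circle.exp z.1 * e z.2)
  have hΦ : Continuous Φ := by fun_prop
  have hΦne : ∀ t ∈ Ioo (0 : ℝ) 1, ∀ x, Φ (t, x) ≠ x := by
    intro t ht x h
    have h₁ : Circle.exp t * e x = e x := by simpa [Φ, e.symm_apply_eq] using h
    have h₂ : Circle.exp t = Circle.exp 0 := by simpa using h₁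
    have h₃ := congrArg (fun c : Circle => Complex.arg c) h₂
    rw [Circle.arg_exp (by linarith [ht.1, Real.pi_pos]) (by linarith [ht.2, Real.pi_gt_three]),
      Circle.arg_exp (by linarith [Real.pi_pos]) Real.pi_pos.le] at h₃
    exact ht.1.ne' h₃
  obtain ⟨δ, hδ, hδne⟩ := exists_pos_forall_ne_smul (G := G) Φ hΦ (by simp [Φ]) hΦne
  obtain ⟨T, hT, hT₀, hTmono, hTg⟩ : ∃ T : ℝ → ℝ, Continuous T ∧ T 0 = 0 ∧ StrictMono T ∧
      ∀ t, g • Φ (t, F 0) = Φ (T t, g • F 0) := by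
    by_cases hg₁ : g = 1
    · exact ⟨id, continuous_id, rfl, strictMono_id, by simp [hg₁]⟩
    obtain ⟨T, hT, hT₀, hTmono, hTg⟩ := Circle.exists_strictMono_lift
      (g := fun z => e (g • e.symm z))
      (e.continuous.comp ((continuous_const_smul g).comp e.symm.continuous))
      (e.injective.comp ((MulAction.injective g).comp e.symm.injective))
      (fun z hz => hg₁ (isCancelSMul_iff_eq_one_of_smul_eq.mp ‹_› g (e.symm z)
        (e.injective (by simpa using hz)))) (e (F 0))
    refine ⟨T, hT, hT₀, hTmono, fun t => e.injective ?_⟩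
    simpa [Φ] using hTg t
  obtain ⟨ε, hε, hεδ, hTε⟩ : ∃ ε > 0, ε ≤ δ ∧ T ε ≤ δ := by
    have h₁ : ∀ᶠ t in 𝓝[>] (0 : ℝ), T t < δ :=
      (hT.tendsto 0).mono_left nhdsWithin_le_nhds |>.eventually_lt_const (by rwa [hT₀])
    have h₂ : ∀ᶠ t in 𝓝[>] (0 : ℝ), t < δ :=
      (tendsto_id.mono_left nhdsWithin_le_nhds).eventually_lt_const hδ
    obtain ⟨t, h₁, h₂, h₃⟩ := (h₁.and (h₂.and self_mem_nhdsWithin)).exists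
    exact ⟨t, h₃, h₂.le, h₁.le⟩
  have hTpos : 0 < T ε := hT₀ ▸ hTmono hε
  obtain ⟨f', hf', hf'q⟩ := exists_homotopic_of_twisted_homotopy f hq hq₁
    ⟨fun z => Φ ((1 - z.2) * (ε * z.1) + z.2 * T (ε * z.1), F z.2), by fun_prop⟩ g
    (fun t => by simp [hg, hTg]) (fun u => by simpa [hT₀, Φ] using hF u)
  refine ⟨f', f, hf', .refl f, fun x hx => ?_⟩
  obtain ⟨u, rfl⟩ := hq.surjective x
  rw [hf'q, ← hF u] at hx
  obtain ⟨k, hk⟩ := Quotient.exact hx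
  have hu := u.2
  refine hδne _ ⟨?_, ?_⟩ (F u) k hk.symm
  · simp only [Set.Icc.coe_one, mul_one]
    rcases hu.1.eq_or_lt with h | h
    · simpa [← h] using hε
    · have := mul_pos h hTpos
      have := mul_nonneg (sub_nonneg.mpr hu.2) hε.le
      linarith
  · simp only [Set.Icc.coe_one, mul_one]
    nlinarith [mul_le_mul_of_nonneg_left hεδ (sub_nonneg.mpr hu.2),
      mul_le_mul_of_nonneg_left hTε hu.1]

/-- Loops in the orbit space of a free finite group action on a sphere of dimension at least two
that carries a flow without fixed points at small times. -/
lemma exists_homotopic_ne_of_two_le_dim {n : ℕ} (hn : 2 ≤ n) {G M : Type*} [Group G] [Finite G]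
    [MulAction G (sphere (0 : EuclideanSpace ℝ (Fin (n + 1))) 1)]
    [ContinuousConstSMul G (sphere (0 : EuclideanSpace ℝ (Fin (n + 1))) 1)]
    [IsCancelSMul G (sphere (0 : EuclideanSpace ℝ (Fin (n + 1))) 1)]
    [TopologicalSpace M] [T2Space M]
    (hp : IsCoveringMap (Quotient.mk
      (MulAction.orbitRel G (sphere (0 : EuclideanSpace ℝ (Fin (n + 1))) 1))))
    (Φ : ℝ × sphere (0 : EuclideanSpace ℝ (Fin (n + 1))) 1 →
      sphere (0 : EuclideanSpace ℝ (Fin (n + 1))) 1)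
    (hΦ : Continuous Φ) (hΦ₀ : ∀ x, Φ (0, x) = x)
    (hΦne : ∀ t ∈ Ioo (0 : ℝ) 1, ∀ x, Φ (t, x) ≠ x)
    (f : C(M, Quotient (MulAction.orbitRel G (sphere (0 : EuclideanSpace ℝ (Fin (n + 1))) 1))))
    {q : unitInterval → M} (hq : IsQuotientMap q) (hq₀ : q 0 = q 1)
    (hq₁ : ∀ u v, q u = q v → u = v ∨ (u = 0 ∧ v = 1) ∨ (u = 1 ∧ v = 0)) :
    ∃ f₁ f₂ : C(M, Quotient (MulAction.orbitRel G
        (sphere (0 : EuclideanSpace ℝ (Fin (n + 1))) 1))),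
      f₁.Homotopic f ∧ f₂.Homotopic f ∧ ∀ x, f₁ x ≠ f₂ x := by
  have : Fact (Module.finrank ℝ (EuclideanSpace ℝ (Fin (n + 1))) = n + 1) := ⟨by simp⟩
  obtain ⟨F, g, hg, hF⟩ := exists_twisted_lift hp f hq.continuous hq₀
  obtain ⟨δ, hδ, hδne⟩ := exists_pos_forall_ne_smul (G := G) Φ hΦ hΦ₀ hΦne
  set y := F 0
  set z := F 1
  set φ := stereographic' n (-z)
  have hs : φ.source = {-z}ᶜ := stereographic'_source (-z)
  have ht : φ.target = univ := stereographic'_target (-z)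
  have hφc : Continuous φ.symm := by
    rw [← continuousOn_univ, ← ht]; exact φ.continuousOn_symm
  have hzs : z ∈ φ.source := by
    rw [hs]; exact ne_neg_of_mem_unit_sphere ℝ z
  obtain ⟨ε, hε, hεδ, hεz, hεy⟩ : ∃ ε > 0, ε ≤ δ ∧ (∀ t ∈ Icc 0 ε, Φ (t, z) ∈ φ.source) ∧
      ∀ t ∈ Icc 0 ε, g • Φ (t, y) ∈ φ.source := by
    have h₁ : ∀ᶠ t in 𝓝 (0 : ℝ), Φ (t, z) ∈ φ.source :=
      (Continuous.tendsto (f := fun t => Φ (t, z)) (by fun_prop) 0).eventually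
        (φ.open_source.mem_nhds (by simpa only [hΦ₀] using hzs))
    have h₂ : ∀ᶠ t in 𝓝 (0 : ℝ), g • Φ (t, y) ∈ φ.source :=
      (Continuous.tendsto (f := fun t => g • Φ (t, y)) (by fun_prop) 0).eventually
        (φ.open_source.mem_nhds (by simpa only [hΦ₀, ← hg] using hzs))
    obtain ⟨ρ, hρ, hball⟩ := Metric.eventually_nhds_iff.mp (h₁.and h₂)
    have hsub : ∀ t ∈ Icc (0 : ℝ) (min δ (ρ / 2)), dist t 0 < ρ := by
      intro t ht
      rw [Real.dist_eq, sub_zero, abs_of_nonneg ht.1]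
      linarith [ht.2.trans (min_le_right _ _)]
    exact ⟨min δ (ρ / 2), by positivity, min_le_left _ _, fun t ht => (hball (hsub t ht)).1,
      fun t ht => (hball (hsub t ht)).2⟩
  have hmem : ∀ t : unitInterval, ε * (t : ℝ) ∈ Icc 0 ε := fun t =>
    ⟨mul_nonneg hε.le t.2.1, mul_le_of_le_one_right hε.le t.2.2⟩
  let a : unitInterval → EuclideanSpace ℝ (Fin n) := fun t => φ (Φ (ε * t, z))
  let b : unitInterval → EuclideanSpace ℝ (Fin n) := fun t => φ (g • Φ (ε * t, y))
  have ha : Continuous a := φ.continuousOn.comp_continuous (by fun_prop) fun t => hεz _ (hmem t)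
  have hb : Continuous b := φ.continuousOn.comp_continuous (by fun_prop) fun t => hεy _ (hmem t)
  have hφa : ∀ t, φ.symm (a t) = Φ (ε * t, z) := fun t => φ.left_inv (hεz _ (hmem t))
  have hφb : ∀ t, φ.symm (b t) = g • Φ (ε * t, y) := fun t => φ.left_inv (hεy _ (hmem t))
  have hab : a 0 = b 0 := by simp [a, b, hΦ₀, ← hg]
  let S : Set (EuclideanSpace ℝ (Fin n)) := φ.symm ⁻¹' MulAction.orbit G z
  have hφinj : Function.Injective φ.symm := by
    rw [← injOn_univ, ← ht]; exact φ.symm.injOn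
  have hS : S.Finite := (Set.finite_range _).preimage hφinj.injOn
  have hconn : IsPathConnected Sᶜ := by
    refine hS.countable.isPathConnected_compl_of_one_lt_rank ?_
    rw [← Module.finrank_eq_rank]
    simp only [finrank_euclideanSpace, Fintype.card_fin]
    exact_mod_cast hn
  have haS : a 1 ∈ Sᶜ := by
    rintro ⟨k, hk⟩
    rw [hφa] at hk
    exact hδne _ ⟨by simpa using hε, by simpa using hεδ⟩ z k hk.symm
  have hbS : b 1 ∈ Sᶜ := by
    rintro ⟨k, hk⟩
    rw [hφb, eq_comm, ← eq_inv_smul_iff] at hk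
    simp only [hg, ← mul_smul] at hk
    exact hδne _ ⟨by simpa using hε, by simpa using hεδ⟩ y _ hk
  obtain ⟨w, hw⟩ := hconn.joinedIn _ haS _ hbS
  let W : unitInterval × ℝ → EuclideanSpace ℝ (Fin n) := fun r =>
    (1 - r.2) • (a r.1 - (r.1 : ℝ) • a 1 - (1 - (r.1 : ℝ)) • a 0) +
      r.2 • (b r.1 - (r.1 : ℝ) • b 1 - (1 - (r.1 : ℝ)) • b 0) +
      (r.1 : ℝ) • w.extend r.2 + (1 - (r.1 : ℝ)) • a 0
  have hW : Continuous W := by fun_prop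
  have hW₀ : ∀ v, W (0, v) = a 0 := fun v => by simp [W]
  have hW₁ : ∀ v, W (1, v) = w.extend v := fun v => by simp [W]
  have hWa : ∀ t, W (t, 0) = a t := fun t => by simp [W]; abel
  have hWb : ∀ t, W (t, 1) = b t := fun t => by simp [W, hab]; abel
  let clamp : ℝ → unitInterval := projIcc 0 1 zero_le_one
  have hclamp : Continuous clamp := continuous_projIcc
  have hclamp₁ : ∀ v, 1 ≤ v → clamp v = 1 := fun v hv => projIcc_of_right_le zero_le_one hv
  have hclamp₀ : clamp 0 = 0 := projIcc_left zero_le_one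
  obtain ⟨f₁, hf₁, hf₁q⟩ := exists_homotopic_of_twisted_homotopy f hq hq₁
    ⟨fun r => F (clamp ((1 + (r.1 : ℝ)) * r.2)), by fun_prop⟩ g
    (fun t => by simp [hclamp₀, hclamp₁ (1 + t) (by linarith [t.2.1]), hg, y, z])
    (fun u => by simpa [clamp] using hF u)
  let K : unitInterval × unitInterval → sphere (0 : EuclideanSpace ℝ (Fin (n + 1))) 1 := fun r =>
    if (r.2 : ℝ) ≤ 1 / 2 then Φ (ε * r.1, F (clamp (2 * r.2)))
    else φ.symm (W (r.1, 2 * (r.2 : ℝ) - 1))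
  have hK : Continuous K := by
    refine Continuous.if_le (by fun_prop) (by fun_prop) (by fun_prop) continuous_const ?_
    rintro ⟨t, u⟩ hu
    simp only at hu
    simp only [hu]
    norm_num
    rw [hWa, hφa, hclamp₁ 1 le_rfl]
  have hK₁ : ∀ t, K (t, 1) = g • K (t, 0) := by
    intro t
    have h₁ : K (t, 1) = φ.symm (W (t, 1)) := by
      simp only [K, Set.Icc.coe_one]; norm_num
    have h₂ : K (t, 0) = Φ (ε * t, y) := by
      simp only [K, Set.Icc.coe_zero, mul_zero, hclamp₀]; norm_num [y]
    rw [h₁, h₂, hWb, hφb]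
  have hK₀ : ∀ u, K (0, u) = F (clamp (2 * u)) := by
    intro u
    simp only [K]
    split_ifs with hu
    · simp [hΦ₀]
    · rw [hW₀, hφa, hclamp₁ _ (by linarith)]; simp [hΦ₀, z]
  obtain ⟨f₂, hf₂, hf₂q⟩ := exists_homotopic_of_twisted_homotopy f₁ hq hq₁ ⟨K, hK⟩ g hK₁
    (fun u => by
      rw [hf₁q]
      simp only [ContinuousMap.coe_mk, hK₀, Set.Icc.coe_one]
      norm_num)
  refine ⟨f₂, f₁, hf₂.trans hf₁, hf₁, fun x hx => ?_⟩
  obtain ⟨u, rfl⟩ := hq.surjective x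
  rw [hf₁q, hf₂q] at hx
  obtain ⟨k, hk⟩ := Quotient.exact hx
  have htwo : (1 : ℝ) + 1 = 2 := by norm_num
  simp only [ContinuousMap.coe_mk, Set.Icc.coe_one, htwo, K] at hk
  split_ifs at hk with hu
  · exact hδne _ ⟨by simpa using hε, by simpa using hεδ⟩ _ k hk.symm
  · rw [hclamp₁ _ (by linarith), hW₁, w.extend_apply ⟨by linarith, by linarith [u.2.2]⟩] at hk
    exact hw _ ⟨k, hk⟩

end Loops

section SpaceForm

/-- The circle and the unit sphere of the Euclidean plane are homeomorphic. -/
lemma nonempty_homeomorph_sphere_circle :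
    Nonempty (sphere (0 : EuclideanSpace ℝ (Fin (1 + 1))) 1 ≃ₜ Circle) := by
  let L : ℂ ≃ₗᵢ[ℝ] EuclideanSpace ℝ (Fin (1 + 1)) := Complex.orthonormalBasisOneI.repr
  refine ⟨(L.toHomeomorph.subtype fun z => ?_).symm⟩
  simp [Submonoid.unitSphere, L.norm_map]

/-- Every map from a positive-dimensional sphere to an odd-dimensional spherical space form admits
two homotopic replacements without coincidences. -/
lemma exists_homotopic_ne_sphere_space_form {n m : ℕ} (hodd : Odd n) (hm : 1 ≤ m)
    {G : Type*} [Group G] [Finite G]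
    [MulAction G (sphere (0 : EuclideanSpace ℝ (Fin (n + 1))) 1)]
    [ContinuousConstSMul G (sphere (0 : EuclideanSpace ℝ (Fin (n + 1))) 1)]
    [IsCancelSMul G (sphere (0 : EuclideanSpace ℝ (Fin (n + 1))) 1)]
    (f : C(sphere (0 : EuclideanSpace ℝ (Fin (m + 1))) 1,
      Quotient (MulAction.orbitRel G (sphere (0 : EuclideanSpace ℝ (Fin (n + 1))) 1)))) :
    ∃ f₁ f₂ : C(sphere (0 : EuclideanSpace ℝ (Fin (m + 1))) 1,
        Quotient (MulAction.orbitRel G (sphere (0 : EuclideanSpace ℝ (Fin (n + 1))) 1))),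
      f₁.Homotopic f ∧ f₂.Homotopic f ∧ ∀ x, f₁ x ≠ f₂ x := by
  have hp : IsCoveringMap (Quotient.mk
      (MulAction.orbitRel G (sphere (0 : EuclideanSpace ℝ (Fin (n + 1))) 1))) :=
    isQuotientCoveringMap_quotientMk_of_properlyDiscontinuousSMul.isCoveringMap
  obtain ⟨Φ, hΦ, hΦ₀, hΦne⟩ := exists_flow_sphere_of_odd hodd
  obtain rfl | hm := hm.eq_or_lt
  · obtain ⟨q, hq, hq₀, hq₁⟩ := exists_isQuotientMap_unitInterval_circle
    obtain ⟨e⟩ := nonempty_homeomorph_sphere_circle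
    have hq' := e.symm.isQuotientMap.comp hq
    have hq₀' : (e.symm ∘ q) 0 = (e.symm ∘ q) 1 := congrArg e.symm hq₀
    have hq₁' : ∀ u v, (e.symm ∘ q) u = (e.symm ∘ q) v →
        u = v ∨ (u = 0 ∧ v = 1) ∨ (u = 1 ∧ v = 0) := fun u v h => hq₁ u v (e.symm.injective h)
    obtain rfl | hn : n = 1 ∨ 2 ≤ n := by obtain ⟨k, rfl⟩ := hodd; omega
    · exact exists_homotopic_ne_of_homeomorph_circle e hp f hq' hq₀' hq₁'
    · exact exists_homotopic_ne_of_two_le_dim hn hp Φ hΦ hΦ₀ hΦne f hq' hq₀' hq₁'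
  · obtain ⟨F, hF⟩ := hp.exists_lift_sphere Quotient.mk_surjective hm f
    obtain ⟨ε, hε, hne⟩ := exists_pos_forall_ne_smul (G := G) Φ hΦ hΦ₀ hΦne
    refine ⟨⟨fun x => Quotient.mk _ (Φ (ε, F x)),
      continuous_quotient_mk'.comp (by fun_prop)⟩, f, ContinuousMap.Homotopic.symm
        ⟨⟨⟨fun r => Quotient.mk _ (Φ (ε * r.1, F r.2)), continuous_quotient_mk'.comp
          (by fun_prop)⟩, ?_, ?_⟩⟩, .refl f, fun x hx => ?_⟩
    · intro x; simpa [hΦ₀] using hF x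
    · intro x; simp
    · rw [ContinuousMap.coe_mk, ← hF x] at hx
      obtain ⟨k, hk⟩ := Quotient.exact hx
      exact hne ε ⟨hε, le_rfl⟩ (F x) k hk.symm

end SpaceForm

lemma MCC_eq_zero_of_ne {M N : Type*} [TopologicalSpace M] [TopologicalSpace N]
    {f₁ f₂ g₁ g₂ : C(M, N)} (h₁ : g₁.Homotopic f₁) (h₂ : g₂.Homotopic f₂)
    (hne : ∀ x, g₁ x ≠ g₂ x) : MCC f₁ f₂ = 0 := by
  have : IsEmpty (ConnectedComponents {x : M // g₁ x = g₂ x}) :=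
    ⟨fun c => (ConnectedComponents.surjective_coe c).elim fun x _ => hne x.1 x.2⟩
  refine nonpos_iff_eq_zero.mp ?_
  refine iInf₂_le_of_le g₁ h₁ (iInf₂_le_of_le g₂ h₂ ?_)
  exact ((ENat.card_eq_zero_iff_empty _).mpr this).le

theorem mcc_eq_zero_of_homotopic_sphere_space_form
    (n : ℕ) (hn : 1 ≤ n) (hodd : Odd n)
    (G : Type*) [Group G] [Finite G]
    [MulAction G (Metric.sphere (0 : EuclideanSpace ℝ (Fin (n + 1))) 1)]
    (hcont : ∀ g : G,
      Continuous fun x : Metric.sphere (0 : EuclideanSpace ℝ (Fin (n + 1))) 1 => g • x)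
    (hfree : ∀ (g : G) (x : Metric.sphere (0 : EuclideanSpace ℝ (Fin (n + 1))) 1),
      g • x = x → g = 1)
    (m : ℕ) (hm : 1 ≤ m)
    (f₁ f₂ : C(Metric.sphere (0 : EuclideanSpace ℝ (Fin (m + 1))) 1,
      Quotient (MulAction.orbitRel G (Metric.sphere (0 : EuclideanSpace ℝ (Fin (n + 1))) 1))))
    (h : f₁.Homotopic f₂) :
    MCC f₁ f₂ = 0 ∧
      ∃ f₁' f₂' : C(Metric.sphere (0 : EuclideanSpace ℝ (Fin (m + 1))) 1,
          Quotient (MulAction.orbitRel G (Metric.sphere (0 : EuclideanSpace ℝ (Fin (n + 1))) 1))),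
        f₁'.Homotopic f₁ ∧ f₂'.Homotopic f₂ ∧ ∀ x, f₁' x ≠ f₂' x := by
  have : ContinuousConstSMul G (Metric.sphere (0 : EuclideanSpace ℝ (Fin (n + 1))) 1) := ⟨hcont⟩
  have : IsCancelSMul G (Metric.sphere (0 : EuclideanSpace ℝ (Fin (n + 1))) 1) :=
    isCancelSMul_iff_eq_one_of_smul_eq.mpr hfree
  obtain ⟨f₁', f₂', h₁, h₂, hne⟩ := exists_homotopic_ne_sphere_space_form hodd hm f₁
  exact ⟨MCC_eq_zero_of_ne h₁ (h₂.trans h) hne, f₁', f₂', h₁, h₂.trans h, hne⟩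
end

section
/- Let n ≥ 1 be odd, let G be a finite group acting freely and continuously on the unit sphere Sⁿ ⊂ ℝⁿ⁺¹, and let N = Sⁿ/G be the orbit space with the quotient topology. Let 1 ≤ m < n and let f₁, f₂ : Sᵐ → N be any continuous maps. Then MCC(f₁, f₂) = 0; that is, there exist continuous maps f₁' homotopic to f₁ and f₂' homotopic to f₂ with f₁'(x) ≠ f₂'(x) for every x ∈ Sᵐ. -/
open Metric Module
open scoped unitInterval

section Normalize

variable {X V : Type*} [TopologicalSpace X] [NormedAddCommGroup V] [NormedSpace ℝ V]

/-- A nowhere vanishing continuous map, radially projected to the unit sphere. -/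
noncomputable def ContinuousMap.toUnitSphere (w : C(X, V)) (hw : ∀ x, w x ≠ 0) :
    C(X, sphere (0 : V) 1) where
  toFun x := ⟨‖w x‖⁻¹ • w x, by simp [norm_smul, hw x]⟩
  continuous_toFun := by
    refine Continuous.subtype_mk ?_ _
    exact (w.continuous.norm.inv₀ fun x => norm_ne_zero_iff.2 (hw x)).smul w.continuous

theorem ContinuousMap.coe_toUnitSphere (w : C(X, V)) (hw : ∀ x, w x ≠ 0) (x : X) :
    (w.toUnitSphere hw x : V) = ‖w x‖⁻¹ • w x := rfl

theorem ContinuousMap.toUnitSphere_eq_of_eq (w : C(X, V)) (hw : ∀ x, w x ≠ 0) {x : X}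
    {u : sphere (0 : V) 1} (h : w x = u) : w.toUnitSphere hw x = u := by
  ext1
  simp [coe_toUnitSphere, h]

theorem norm_inv_norm_smul_sub_le {u v : V} (hu : ‖u‖ = 1) (hv : v ≠ 0) :
    ‖‖v‖⁻¹ • v - u‖ ≤ 2 * ‖v - u‖ := by
  have hv' : ‖v‖ ≠ 0 := norm_ne_zero_iff.2 hv
  have h₁ : ‖‖v‖⁻¹ • v - v‖ = |‖u‖ - ‖v‖| := by
    have : ‖v‖⁻¹ • v - v = (‖v‖⁻¹ * (1 - ‖v‖)) • v := by
      rw [mul_sub, inv_mul_cancel₀ hv', sub_smul, mul_one, one_smul]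
    rw [this, norm_smul, norm_mul, norm_inv, norm_norm, hu, Real.norm_eq_abs]
    field_simp
  calc ‖‖v‖⁻¹ • v - u‖ ≤ ‖‖v‖⁻¹ • v - v‖ + ‖v - u‖ := norm_sub_le_norm_sub_add_norm_sub _ _ _
    _ ≤ ‖v - u‖ + ‖v - u‖ := by
      gcongr
      rw [h₁, norm_sub_rev]
      exact abs_norm_sub_norm_le u v
    _ = 2 * ‖v - u‖ := by ring

end Normalize

section GeneralPosition

variable {E V : Type*} [NormedAddCommGroup E] [NormedSpace ℝ E] [FiniteDimensional ℝ E]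
  [NormedAddCommGroup V] [NormedSpace ℝ V] [FiniteDimensional ℝ V]

/-- A smooth map into a space of codimension at least two can be translated by an arbitrarily
small vector so as to miss finitely many given lines through the origin. -/
theorem exists_norm_lt_add_ne_smul (hdim : finrank ℝ E + 1 < finrank ℝ V) {P : E → V}
    (hP : ContDiff ℝ 1 P) {B : Set V} (hB : B.Finite) {ε : ℝ} (hε : 0 < ε) :
    ∃ c : V, ‖c‖ < ε ∧ ∀ x, ∀ b ∈ B, ∀ s : ℝ, P x + c ≠ s • b := by
  have hd : dimH (⋃ b ∈ B, Set.range fun q : ℝ × E => q.1 • b - P q.2) < finrank ℝ V := by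
    refine lt_of_le_of_lt (b := ((finrank ℝ E + 1 : ℕ) : ENNReal)) ?_ (by exact_mod_cast hdim)
    rw [dimH_bUnion hB.countable]
    refine iSup₂_le fun b _ => ?_
    have h : ContDiff ℝ 1 fun q : ℝ × E => q.1 • b - P q.2 := by fun_prop
    refine h.dimH_range_le.trans ?_
    simp [add_comm]
  obtain ⟨c, hc, hcε⟩ := (dense_compl_of_dimH_lt_finrank hd).exists_dist_lt 0 hε
  refine ⟨c, by simpa using hcε, fun x b hb s h => hc ?_⟩
  simp only [Set.mem_iUnion]
  exact ⟨b, hb, (s, x), by simp [← h]⟩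

/-- A map from a Euclidean space to a sphere of larger dimension can be pushed off a finite set by
a compactly supported homotopy. -/
theorem exists_homotopy_avoiding_finite (hdim : finrank ℝ E + 1 < finrank ℝ V)
    (F : C(E, sphere (0 : V) 1)) {B : Set (sphere (0 : V) 1)} (hB : B.Finite)
    (hFB : IsCompact (F ⁻¹' B)) :
    ∃ (H : C(I × E, sphere (0 : V) 1)) (K : Set E), IsCompact K ∧
      (∀ x, H (0, x) = F x) ∧ (∀ x, H (1, x) ∉ B) ∧ ∀ t, ∀ x ∉ K, H (t, x) = F x := by
  obtain ⟨K₁, hK₁, hFK₁⟩ := exists_compact_superset hFB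
  obtain ⟨φ, hφ₁, -, hφc, hφI⟩ := exists_continuous_one_zero_of_isCompact hK₁ isClosed_empty
    (Set.disjoint_empty K₁)
  obtain ⟨δ, hδ, hδB⟩ : ∃ δ : ℝ, 0 < δ ∧
      ∀ x ∈ tsupport φ \ interior K₁, ∀ b ∈ B, δ ≤ ‖(F x : V) - b‖ := by
    rcases B.eq_empty_or_nonempty with rfl | hne
    · exact ⟨1, one_pos, by simp⟩
    obtain ⟨δ, hδ, h⟩ := (hφc.diff isOpen_interior).exists_forall_le'
      (f := fun x => infDist (F x) B) (a := 0)
      ((continuous_infDist_pt B).comp F.continuous).continuousOn fun x hx =>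
        (hB.isClosed.notMem_iff_infDist_pos hne).1 fun hxB => hx.2 (hFK₁ hxB)
    refine ⟨δ, hδ, fun x hx b hb => (h x hx).trans ((infDist_le_dist_of_mem hb).trans_eq ?_)⟩
    rw [Subtype.dist_eq, dist_eq_norm]
  obtain ⟨ε, hε, hε₁, hεδ⟩ : ∃ ε : ℝ, 0 < ε ∧ 4 * ε < 1 ∧ 4 * ε < δ :=
    ⟨min 1 δ / 5, by positivity, by linarith [min_le_left 1 δ, lt_min one_pos hδ],
      by linarith [min_le_right 1 δ, lt_min one_pos hδ]⟩
  obtain ⟨P, hP, hPF, -⟩ := (continuous_subtype_val.comp F.continuous).exists_contDiff_approx 1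
    (ε := fun _ => ε) continuous_const fun _ => hε
  obtain ⟨c, hc, hcB⟩ := exists_norm_lt_add_ne_smul hdim hP (hB.image Subtype.val) hε
  have hPc : ∀ x, ‖P x + c - F x‖ < 2 * ε := fun x => by
    have h := hPF x
    rw [dist_eq_norm] at h
    calc ‖P x + c - F x‖ = ‖(P x - F x) + c‖ := by congr 1; abel
      _ ≤ ‖P x - F x‖ + ‖c‖ := norm_add_le _ _
      _ < 2 * ε := by simp only [Function.comp_apply] at h; linarith
  have hPcont := hP.continuous
  let w : C(I × E, V) := ⟨fun q => F q.2 + ((q.1 : ℝ) * φ q.2) • (P q.2 + c - F q.2), by fun_prop⟩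
  have hwF : ∀ q, ‖w q - F q.2‖ < 2 * ε := fun q => by
    have h₀ : 0 ≤ (q.1 : ℝ) * φ q.2 := mul_nonneg q.1.2.1 (hφI _).1
    have h₁ : (q.1 : ℝ) * φ q.2 ≤ 1 := mul_le_one₀ q.1.2.2 (hφI _).1 (hφI _).2
    have : w q - F q.2 = ((q.1 : ℝ) * φ q.2) • (P q.2 + c - F q.2) := by
      simp [w]
    rw [this, norm_smul, Real.norm_of_nonneg h₀]
    exact (mul_le_of_le_one_left (norm_nonneg _) h₁).trans_lt (hPc _)
  have hw : ∀ q, w q ≠ 0 := fun q h => by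
    have := hwF q
    rw [h, zero_sub, norm_neg, norm_eq_of_mem_sphere] at this
    linarith
  have hwφ : ∀ t, ∀ x ∉ tsupport φ, w (t, x) = F x := fun t x hx => by
    simp [w, image_eq_zero_of_notMem_tsupport hx]
  refine ⟨w.toUnitSphere hw, tsupport φ, hφc, fun x => ?_, fun x hx => ?_, fun t x hx => ?_⟩
  · exact w.toUnitSphere_eq_of_eq hw (by simp [w])
  · by_cases hxK : x ∈ interior K₁
    · have hx₁ : w (1, x) = P x + c := by simp [w, hφ₁ (interior_subset hxK)]
      refine hcB x _ ⟨_, hx, rfl⟩ ‖w (1, x)‖ ?_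
      rw [w.coe_toUnitSphere, smul_inv_smul₀ (norm_ne_zero_iff.2 (hw _)), hx₁]
    by_cases hxφ : x ∈ tsupport φ
    · have h₁ := hδB x ⟨hxφ, hxK⟩ _ hx
      have h₂ := norm_inv_norm_smul_sub_le (norm_eq_of_mem_sphere (F x)) (hw (1, x))
      have h₃ := hwF (1, x)
      rw [w.coe_toUnitSphere, norm_sub_rev] at h₁
      linarith
    · rw [w.toUnitSphere_eq_of_eq hw (hwφ 1 x hxφ)] at hx
      exact hxK (hFK₁ hx)
  · exact w.toUnitSphere_eq_of_eq hw (hwφ t x hx)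

end GeneralPosition

section Collapse

variable {V : Type*} [NormedAddCommGroup V] [InnerProductSpace ℝ V]

/-- The map collapsing a closed hemisphere to its pole is homotopic to the identity. -/
theorem exists_homotopic_id_collapsing_hemisphere (e : sphere (0 : V) 1) :
    ∃ r : C(sphere (0 : V) 1, sphere (0 : V) 1), r.Homotopic (.id _) ∧
      ∀ x : sphere (0 : V) 1, inner ℝ (x : V) e ≤ 0 → r x = -e := by
  let s : sphere (0 : V) 1 → ℝ := fun x => 1 - max (inner ℝ (x : V) e) 0
  have hs : Continuous s := by fun_prop
  let w : C(I × sphere (0 : V) 1, V) :=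
    ⟨fun q => (1 - (q.1 : ℝ) * s q.2) • (q.2 : V) - ((q.1 : ℝ) * s q.2) • (e : V), by fun_prop⟩
  have hw : ∀ q, w q ≠ 0 := by
    rintro ⟨t, x⟩ h
    have hx₁ := norm_eq_of_mem_sphere x
    have he₁ := norm_eq_of_mem_sphere e
    have hle : inner ℝ (x : V) e ≤ 1 := by
      simpa [hx₁, he₁] using real_inner_le_norm (x : V) e
    have hs₀ : 0 ≤ s x := by simp only [s, sub_nonneg]; exact max_le hle zero_le_one
    have hs₁ : s x ≤ 1 := by simp [s]
    have h₀ : 0 ≤ (t : ℝ) * s x := mul_nonneg t.2.1 hs₀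
    have h₁ : (t : ℝ) * s x ≤ 1 := mul_le_one₀ t.2.2 hs₀ hs₁
    have h' : (1 - (t : ℝ) * s x) • (x : V) = ((t : ℝ) * s x) • (e : V) := sub_eq_zero.1 h
    have hn := congrArg norm h'
    rw [norm_smul, norm_smul, hx₁, he₁, mul_one, mul_one, Real.norm_of_nonneg h₀,
      Real.norm_of_nonneg (sub_nonneg.2 h₁)] at hn
    have hxe : (x : V) = e := by
      rw [hn] at h'
      exact smul_right_injective V (by intro h; linarith) h'
    have : s x = 0 := by simp [s, hxe, he₁]
    rw [this] at hn
    simp at hn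
  let H := w.toUnitSphere hw
  refine ⟨H.comp ⟨fun x => (1, x), by fun_prop⟩, .symm ⟨⟨H, fun x => ?_, fun x => rfl⟩⟩,
    fun x hx => ?_⟩
  · exact w.toUnitSphere_eq_of_eq hw (by simp [w])
  · exact w.toUnitSphere_eq_of_eq hw (by simp [w, s, max_eq_right hx])

end Collapse

section CoveringSphere

variable {m : ℕ} {V : Type*} [NormedAddCommGroup V] [NormedSpace ℝ V] [FiniteDimensional ℝ V]
  {N : Type*} [TopologicalSpace N] {p : sphere (0 : V) 1 → N}

/-- A map from a sphere to a space finitely covered by a sphere of larger dimension can be pushed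
off a point by a homotopy fixing a base point. -/
theorem exists_homotopic_avoiding_of_apply_ne (hdim : m + 1 < finrank ℝ V) (hp : IsCoveringMap p)
    (hsurj : p.Surjective) (hfin : ∀ y, (p ⁻¹' {y}).Finite)
    (f : C(sphere (0 : EuclideanSpace ℝ (Fin (m + 1))) 1, N))
    (e : sphere (0 : EuclideanSpace ℝ (Fin (m + 1))) 1) {y : N} (hy : f e ≠ y) :
    ∃ f' : C(sphere (0 : EuclideanSpace ℝ (Fin (m + 1))) 1, N),
      f'.Homotopic f ∧ f' e = f e ∧ ∀ x, f' x ≠ y := by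
  classical
  have hrank : Fact (finrank ℝ (EuclideanSpace ℝ (Fin (m + 1))) = m + 1) := ⟨by simp⟩
  have hyc : IsClosed {y} :=
    (hp.isQuotientMap hsurj).isClosed_preimage.1 (hfin y).isClosed
  let ψ := stereographic' m e
  have hψt : ψ.target = Set.univ := stereographic'_target e
  have hψs : ψ.source = {e}ᶜ := stereographic'_source e
  have hψe : ∀ z, ψ.symm z ≠ e := fun z => by
    have : ψ.symm z ∈ ψ.source := ψ.map_target (hψt ▸ Set.mem_univ z)
    rwa [hψs] at this
  have hψr : ∀ z, ψ (ψ.symm z) = z := fun z => ψ.right_inv (hψt ▸ Set.mem_univ z)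
  have hψl : ∀ x, x ≠ e → ψ.symm (ψ x) = x := fun x hx => ψ.left_inv (hψs ▸ hx)
  have hψc : Continuous ψ.symm := by
    rw [← continuousOn_univ, ← hψt]
    exact ψ.continuousOn_symm
  let g : C(EuclideanSpace ℝ (Fin m), N) := f.comp ⟨ψ.symm, hψc⟩
  obtain ⟨z₀, hz₀⟩ := hsurj (g 0)
  obtain ⟨F, ⟨-, hF⟩, -⟩ := hp.existsUnique_continuousMap_lifts g 0 z₀ hz₀
  have hF' : ∀ z, p (F z) = f (ψ.symm z) := fun z => congrFun hF z
  have hcomp : IsCompact (F ⁻¹' (p ⁻¹' {y})) := by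
    have : F ⁻¹' (p ⁻¹' {y}) = ψ '' (f ⁻¹' {y}) := by
      ext z
      constructor
      · exact fun hz => ⟨ψ.symm z, (hF' z).symm.trans hz, hψr z⟩
      · rintro ⟨x, hx, rfl⟩
        have hxe : x ≠ e := by rintro rfl; exact hy hx
        exact (hF' _).trans (by rw [hψl x hxe]; exact hx)
    rw [this]
    refine (hyc.preimage f.continuous).isCompact.image_of_continuousOn (ψ.continuousOn.mono ?_)
    rw [hψs]
    rintro x hx rfl
    exact hy hx
  obtain ⟨H, K, hK, hH₀, hH₁, hHK⟩ := exists_homotopy_avoiding_finite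
    (by simpa using hdim) F (hfin y) hcomp
  let h : I × sphere (0 : EuclideanSpace ℝ (Fin (m + 1))) 1 → N :=
    fun q => if q.2 = e then f e else p (H (q.1, ψ q.2))
  have hhe : ∀ t, h (t, e) = f e := fun t => by simp [h]
  have hhne : ∀ t x, x ≠ e → h (t, x) = p (H (t, ψ x)) := fun t x hx => by simp [h, hx]
  have hhK : ∀ t, ∀ x ∉ ψ.symm '' K, h (t, x) = f x := fun t x hx => by
    by_cases hxe : x = e
    · rw [hxe, hhe]
    · rw [hhne t x hxe, hHK t _ fun hxK => hx ⟨_, hxK, hψl x hxe⟩, hF', hψl x hxe]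
  have hh : Continuous h := by
    rw [continuous_iff_continuousAt]
    rintro ⟨t, x⟩
    by_cases hxe : x = e
    · have hU : (ψ.symm '' K)ᶜ ∈ nhds x := by
        refine (hK.image hψc).isClosed.isOpen_compl.mem_nhds ?_
        rintro ⟨z, -, hz⟩
        exact hψe z (hz.trans hxe)
      refine ContinuousAt.congr (f := fun q => f q.2) (by fun_prop) ?_
      filter_upwards [continuousAt_snd.preimage_mem_nhds hU] with q hq
      exact (hhK q.1 q.2 hq).symm
    · have hU : {e}ᶜ ∈ nhds x := isOpen_compl_singleton.mem_nhds hxe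
      have hψx : ContinuousAt ψ x := ψ.continuousAt (hψs ▸ hxe)
      refine ContinuousAt.congr (f := fun q => p (H (q.1, ψ q.2))) ?_ ?_
      · exact (hp.continuous.comp H.continuous).continuousAt.comp
          (continuousAt_fst.prodMk (ContinuousAt.comp (f := Prod.snd) hψx continuousAt_snd))
      · filter_upwards [continuousAt_snd.preimage_mem_nhds hU] with q hq
        exact (hhne q.1 q.2 hq).symm
  refine ⟨⟨fun x => h (1, x), by fun_prop⟩, .symm ⟨⟨⟨h, hh⟩, fun x => ?_, fun x => rfl⟩⟩,
    hhe 1, fun x hx => ?_⟩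
  · by_cases hxe : x = e
    · exact hxe ▸ hhe 0
    · exact (hhne 0 x hxe).trans (by rw [hH₀, hF', hψl x hxe])
  · by_cases hxe : x = e
    · subst hxe
      exact hy ((hhe 1).symm.trans hx)
    · exact hH₁ (ψ x) ((hhne 1 x hxe).symm.trans hx)

/-- A map from a sphere to a space finitely covered by a sphere of larger dimension can be pushed
off any point by a homotopy. -/
theorem exists_homotopic_avoiding (hdim : m + 1 < finrank ℝ V) (hp : IsCoveringMap p)
    (hsurj : p.Surjective) (hfin : ∀ y, (p ⁻¹' {y}).Finite)
    (f : C(sphere (0 : EuclideanSpace ℝ (Fin (m + 1))) 1, N)) (y : N) :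
    ∃ f' : C(sphere (0 : EuclideanSpace ℝ (Fin (m + 1))) 1, N),
      f'.Homotopic f ∧ ∀ x, f' x ≠ y := by
  by_cases hf : ∃ e, f e ≠ y
  · obtain ⟨e, he⟩ := hf
    obtain ⟨f', h, -, h'⟩ := exists_homotopic_avoiding_of_apply_ne hdim hp hsurj hfin f e he
    exact ⟨f', h, h'⟩
  · push Not at hf
    have hpath : IsPathConnected (sphere (0 : V) 1) := by
      refine isPathConnected_sphere ?_ 0 zero_le_one
      rw [← finrank_eq_rank]
      exact_mod_cast (show 1 < finrank ℝ V by omega)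
    have : PathConnectedSpace (sphere (0 : V) 1) := isPathConnected_iff_pathConnectedSpace.1 hpath
    have : PathConnectedSpace N := hsurj.pathConnectedSpace hp.continuous
    obtain ⟨b, hb⟩ : ∃ b, b ≠ y := by
      by_contra! hN
      have huniv : p ⁻¹' {y} = Set.univ := Set.eq_univ_of_forall fun z => hN (p z)
      have hnt : (sphere (0 : V) 1).Nontrivial := by
        obtain ⟨v, hv⟩ := hpath.nonempty
        refine ⟨v, hv, -v, by simpa using hv, fun h => ?_⟩
        have : v = 0 := by
          have h₂ : (2 : ℝ) • v = 0 := by rw [two_smul]; exact eq_neg_iff_add_eq_zero.1 h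
          simpa using h₂
        simp [this] at hv
      have hinf := hpath.isConnected.isPreconnected.infinite_of_nontrivial hnt
      exact (Set.infinite_coe_iff.2 hinf).not_finite (Set.finite_univ_iff.1 (huniv ▸ hfin y))
    have hfy : f = .const _ y := ContinuousMap.ext hf
    refine ⟨.const _ b, ?_, fun _ => hb⟩
    let γ := PathConnectedSpace.somePath b y
    rw [hfy]
    exact ⟨⟨⟨fun q => γ q.1, by fun_prop⟩, fun x => γ.source, fun x => γ.target⟩⟩

/-- Two maps from a sphere to a space finitely covered by a sphere of larger dimension can be made
coincidence free by homotopies. -/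
theorem exists_homotopic_forall_ne (hdim : m + 1 < finrank ℝ V) (hp : IsCoveringMap p)
    (hsurj : p.Surjective) (hfin : ∀ y, (p ⁻¹' {y}).Finite)
    (f₁ f₂ : C(sphere (0 : EuclideanSpace ℝ (Fin (m + 1))) 1, N)) :
    ∃ f₁' f₂' : C(sphere (0 : EuclideanSpace ℝ (Fin (m + 1))) 1, N),
      f₁'.Homotopic f₁ ∧ f₂'.Homotopic f₂ ∧ ∀ x, f₁' x ≠ f₂' x := by
  obtain ⟨e⟩ : Nonempty (sphere (0 : EuclideanSpace ℝ (Fin (m + 1))) 1) :=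
    (NormedSpace.sphere_nonempty.2 zero_le_one).to_subtype
  obtain ⟨r₁, hr₁, hr₁e⟩ := exists_homotopic_id_collapsing_hemisphere e
  obtain ⟨r₂, hr₂, hr₂e⟩ := exists_homotopic_id_collapsing_hemisphere (-e)
  obtain ⟨g₂, hg₂, hg₂a⟩ := exists_homotopic_avoiding hdim hp hsurj hfin f₂ (f₁ (-e))
  obtain ⟨g₁, hg₁, hg₁e, hg₁b⟩ := exists_homotopic_avoiding_of_apply_ne hdim hp hsurj hfin f₁ (-e)
    (hg₂a e).symm
  refine ⟨g₁.comp r₁, g₂.comp r₂, hg₁.comp hr₁, hg₂.comp hr₂, fun x hx => ?_⟩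
  simp only [ContinuousMap.comp_apply] at hx
  rcases le_total (inner ℝ (x : EuclideanSpace ℝ (Fin (m + 1))) e) 0 with h | h
  · rw [hr₁e x h, hg₁e] at hx
    exact hg₂a _ hx.symm
  · rw [hr₂e x (by simpa using h), neg_neg] at hx
    exact hg₁b _ hx

end CoveringSphere

theorem MCC_eq_zero_of_homotopic_forall_ne {M N : Type*} [TopologicalSpace M] [TopologicalSpace N]
    {f₁ f₂ g₁ g₂ : C(M, N)} (h₁ : g₁.Homotopic f₁) (h₂ : g₂.Homotopic f₂)
    (h : ∀ x, g₁ x ≠ g₂ x) : MCC f₁ f₂ = 0 := by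
  have : IsEmpty {x : M // g₁ x = g₂ x} := ⟨fun x => h x x.2⟩
  have : IsEmpty (ConnectedComponents {x : M // g₁ x = g₂ x}) :=
    Quotient.instIsEmpty
  refine le_antisymm ?_ zero_le
  exact iInf₂_le_of_le g₁ h₁ (iInf₂_le_of_le g₂ h₂ (ENat.card_eq_zero_iff_empty _ |>.2 this).le)

theorem mcc_eq_zero_of_low_dim_sphere_space_form
    (n : ℕ) (hn : 1 ≤ n) (hodd : Odd n)
    (G : Type*) [Group G] [Finite G]
    [MulAction G (Metric.sphere (0 : EuclideanSpace ℝ (Fin (n + 1))) 1)]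
    (hcont : ∀ g : G,
      Continuous fun x : Metric.sphere (0 : EuclideanSpace ℝ (Fin (n + 1))) 1 => g • x)
    (hfree : ∀ (g : G) (x : Metric.sphere (0 : EuclideanSpace ℝ (Fin (n + 1))) 1),
      g • x = x → g = 1)
    (m : ℕ) (hm : 1 ≤ m) (hmn : m < n)
    (f₁ f₂ : C(Metric.sphere (0 : EuclideanSpace ℝ (Fin (m + 1))) 1,
      Quotient (MulAction.orbitRel G (Metric.sphere (0 : EuclideanSpace ℝ (Fin (n + 1))) 1))))
    :
    MCC f₁ f₂ = 0 ∧
      ∃ f₁' f₂' : C(Metric.sphere (0 : EuclideanSpace ℝ (Fin (m + 1))) 1,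
          Quotient (MulAction.orbitRel G (Metric.sphere (0 : EuclideanSpace ℝ (Fin (n + 1))) 1))),
        f₁'.Homotopic f₁ ∧ f₂'.Homotopic f₂ ∧ ∀ x, f₁' x ≠ f₂' x := by
  have : ContinuousConstSMul G (sphere (0 : EuclideanSpace ℝ (Fin (n + 1))) 1) := ⟨hcont⟩
  have : IsCancelSMul G (sphere (0 : EuclideanSpace ℝ (Fin (n + 1))) 1) :=
    isCancelSMul_iff_eq_one_of_smul_eq.2 hfree
  have hq := isQuotientCoveringMap_quotientMk_of_properlyDiscontinuousSMul
    (E := sphere (0 : EuclideanSpace ℝ (Fin (n + 1))) 1) (G := G)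
  obtain ⟨f₁', f₂', h₁, h₂, h⟩ := exists_homotopic_forall_ne (by simpa using hmn) hq.isCoveringMap
    hq.surjective (fun y => by
      obtain ⟨z, rfl⟩ := hq.surjective y
      exact Finite.of_equiv G (hq.fiberEquivGroup ⟨z, rfl⟩).symm) f₁ f₂
  exact ⟨MCC_eq_zero_of_homotopic_forall_ne h₁ h₂ h, f₁', f₂', h₁, h₂, h⟩
end
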